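/- Fix n ≥ 1 and let Z : SL(2,ℝ) → M_{2n}(ℝ) be given by Z(A)_{ij} = Σ_{l=0}^{2n} C(j−1, l) C(2n−j, 2n−i−l) α_i^{-1} α_j a^{2n−i−l} b^{l} c^{i+l−j} d^{j−l−1} for A = [[a,b],[c,d]], where α_j = C(2n−1, j−1)^{1/2}. Then for every nonzero u ∈ ℝ^{2n}, the stabilizer {A ∈ SL(2,ℝ) : Z(A)u = u} is a closed subgroup of SL(2,ℝ) which is proper, i.e. there exists A ∈ SL(2,ℝ) with Z(A)u ≠ u. -/

import Mathlib

/-!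
For `u ∈ ℝ^{2n}` let `f_u(x, y) = ∑ i, α_i u_i x^{2n-1-i} y^i` be the binary form of degree `2n - 1`
attached to `u` (0-based indices). By the binomial theorem the matrix `Z(A)` is exactly the one
implementing linear substitution of variables, `f_{Z(A)u}(w) = f_u(wA)` for row vectors `w`
(`binForm_mulVec`), and a form vanishing on the line `x = 1` is zero because it has at least `2n`
roots there (`eq_zero_of_binForm`). Hence `Z(A)u = u` if and only if `f_u(wA) = f_u(w)` for
all `w`, which visibly defines a subgroup. It is closed because `Z` is polynomial in the entries.

If every `A` fixed `u`, then `diag(2, 1/2)` would give `2^{2n-1} f_u(1, 0) = f_u(1, 0)`, so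
`f_u(1, 0) = 0`, and the unipotent matrices moving `(1, 0)` to `(1, t)` would then give
`f_u(1, t) = 0` for all `t`, so `u = 0`.
-/

noncomputable section

open Matrix

/-- The symplectic `2n × 2n` matrix `J` with (1-based) entries
`J i j = (-1)^j` if `i + j = 2n + 1` and `0` otherwise. -/
def Jmat (n : ℕ) : Matrix (Fin (2*n)) (Fin (2*n)) ℝ :=
  Matrix.of fun i j =>
    if ((i : ℕ) + 1) + ((j : ℕ) + 1) = 2*n + 1 then (-1 : ℝ)^((j : ℕ) + 1) else 0

/-- The Heisenberg multiplication on `ℝ^{2n} × ℝ`: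
`(u₁,t₁)(u₂,t₂) = (u₁ + u₂, t₁ + t₂ + ⟨u₁, J u₂⟩)`. -/
def heisMul (n : ℕ) (p q : (Fin (2*n) → ℝ) × ℝ) : (Fin (2*n) → ℝ) × ℝ :=
  (p.1 + q.1, p.2 + q.2 + p.1 ⬝ᵥ (Jmat n).mulVec q.1)

/-- `α_j = C(2n-1, j-1)^{1/2}` (with `j` being the 1-based index). -/
def alphaCoef (n : ℕ) (j : Fin (2*n)) : ℝ :=
  Real.sqrt (Nat.choose (2*n - 1) (j : ℕ))

/-- The lattice `Λ_{2n} = α₁⁻¹ℤ ⊕ ⋯ ⊕ α_{2n}⁻¹ℤ ⊆ ℝ^{2n}`, i.e. the set of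
vectors `u` such that `α_j u_j ∈ ℤ` for every `j`. -/
def LambdaLattice (n : ℕ) : Set (Fin (2*n) → ℝ) :=
  {u | ∀ j, ∃ k : ℤ, alphaCoef n j * u j = (k : ℝ)}

/-- `N = α₁² ⋯ α_{2n}² = ∏_j C(2n-1, j-1)`. -/
def Nden (n : ℕ) : ℕ := ∏ j : Fin (2*n), Nat.choose (2*n - 1) (j : ℕ)

/-- The discrete subgroup `Γ_{2n+1} = {(u,t) : u ∈ Λ_{2n}, t ∈ (1/N)ℤ}` of the
Heisenberg group. -/
def GammaSubgroup (n : ℕ) : Set ((Fin (2*n) → ℝ) × ℝ) :=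
  {p | p.1 ∈ LambdaLattice n ∧ ∃ k : ℤ, p.2 = (k : ℝ) / (Nden n : ℝ)}

/-- The `2n`-dimensional irreducible representation of `SL(2,ℝ)`, given (in 1-based
indices `i, j`) by
`Z(A)_{ij} = Σ_l C(j-1, l) C(2n-j, 2n-i-l) α_i⁻¹ α_j a^{2n-i-l} b^l c^{i+l-j} d^{j-l-1}`,
the sum running over those `l` for which both binomial coefficients are nonzero
(equivalently, over `l` with `j ≤ i + l ≤ 2n`; for such `l` all exponents occurring
are nonnegative). -/
def Zrep (n : ℕ) (A : Matrix (Fin 2) (Fin 2) ℝ) : Matrix (Fin (2*n)) (Fin (2*n)) ℝ :=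
  Matrix.of fun i j =>
    ∑ l ∈ Finset.range (2*n + 1),
      if ((j : ℕ) + 1) ≤ ((i : ℕ) + 1) + l ∧ ((i : ℕ) + 1) + l ≤ 2*n then
        (Nat.choose (j : ℕ) l : ℝ) *
        (Nat.choose (2*n - ((j : ℕ) + 1)) (2*n - ((i : ℕ) + 1) - l) : ℝ) *
        (alphaCoef n i)⁻¹ * alphaCoef n j *
        (A 0 0)^(2*n - ((i : ℕ) + 1) - l) * (A 0 1)^l *
        (A 1 0)^(((i : ℕ) + 1) + l - ((j : ℕ) + 1)) * (A 1 1)^((j : ℕ) - l)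
      else 0


/-- The binary form `f_u(x, y) = ∑ i, α_i u_i x^{2n-1-i} y^i` attached to `u`, as a function on
`ℝ × ℝ`; the index `i` is 0-based. -/
def binForm (n : ℕ) (u : Fin (2*n) → ℝ) (x y : ℝ) : ℝ :=
  ∑ i : Fin (2*n), alphaCoef n i * x^(2*n - ((i : ℕ) + 1)) * y^(i : ℕ) * u i

lemma alphaCoef_ne_zero (n : ℕ) (i : Fin (2*n)) : alphaCoef n i ≠ 0 := by
  have h : 0 < Nat.choose (2*n - 1) (i : ℕ) := Nat.choose_pos (by omega)
  unfold alphaCoef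
  positivity

/-- The contribution of a fixed `l`, the exponent of `b`, to the expansion of
`(ax + cy)^{N-j} (bx + dy)^j`: the substitution `m = N - i - l` turns the sum over `i` into the
binomial expansion of `(ax + cy)^{N-j}`. Here `k = N + 1`. -/
lemma sum_index_eq (k j l : ℕ) (hj : j < k) (hl : l ≤ j) (a c x y : ℝ) :
    (∑ i : Fin k, if j + 1 ≤ ((i : ℕ) + 1) + l ∧ ((i : ℕ) + 1) + l ≤ k then
        (Nat.choose (k - (j + 1)) (k - ((i : ℕ) + 1) - l) : ℝ) *
          (a * x)^(k - ((i : ℕ) + 1) - l) * (c * y)^(((i : ℕ) + 1) + l - (j + 1)) else 0) =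
      (a * x + c * y)^(k - (j + 1)) := by
  rw [Fin.sum_univ_eq_sum_range (fun i => if j + 1 ≤ (i + 1) + l ∧ (i + 1) + l ≤ k then
        (Nat.choose (k - (j + 1)) (k - (i + 1) - l) : ℝ) *
          (a * x)^(k - (i + 1) - l) * (c * y)^((i + 1) + l - (j + 1)) else 0) k,
    add_pow, ← Finset.sum_filter]
  refine Finset.sum_nbij' (fun i => k - (i + 1) - l) (fun m => k - (m + 1) - l) ?_ ?_ ?_ ?_ ?_
  · intro i hi
    simp only [Finset.mem_filter, Finset.mem_range] at hi ⊢
    omega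
  · intro m hm
    simp only [Finset.mem_filter, Finset.mem_range] at hm ⊢
    omega
  · intro i hi
    simp only [Finset.mem_filter, Finset.mem_range] at hi
    omega
  · intro m hm
    simp only [Finset.mem_range] at hm
    omega
  · intro i hi
    simp only [Finset.mem_filter, Finset.mem_range] at hi
    have h : k - (j + 1) - (k - (i + 1) - l) = (i + 1) + l - (j + 1) := by omega
    simp only [h]
    ring

/-- The `j`-th column of `Z(A)` encodes the form `α_j (ax + cy)^{2n-1-j} (bx + dy)^j`. -/
lemma sum_Zrep_col (n : ℕ) (A : Matrix (Fin 2) (Fin 2) ℝ) (j : Fin (2*n)) (x y : ℝ) :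
    ∑ i : Fin (2*n), alphaCoef n i * x^(2*n - ((i : ℕ) + 1)) * y^(i : ℕ) * Zrep n A i j =
      alphaCoef n j * (A 0 0 * x + A 1 0 * y)^(2*n - ((j : ℕ) + 1)) *
        (A 0 1 * x + A 1 1 * y)^(j : ℕ) := by
  have hj := j.isLt
  simp only [Zrep, Matrix.of_apply, Finset.mul_sum]
  rw [Finset.sum_comm, add_pow (A 0 1 * x), Finset.mul_sum]
  -- Terms with `l > j` vanish because `Nat.choose j l = 0`.
  rw [← Finset.sum_subset (Finset.range_subset_range.2 (by omega : (j : ℕ) + 1 ≤ 2*n + 1))]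
  · refine Finset.sum_congr rfl fun l hl => ?_
    have hl' : l ≤ (j : ℕ) := by simpa [Nat.lt_succ_iff] using hl
    rw [← sum_index_eq (2*n) j l hj hl' (A 0 0) (A 1 0) x y, Finset.mul_sum, Finset.sum_mul]
    refine Finset.sum_congr rfl fun i _ => ?_
    have hα := mul_inv_cancel₀ (alphaCoef_ne_zero n i)
    split_ifs with h
    · have hx : x^(2*n - ((i : ℕ) + 1)) = x^(2*n - ((i : ℕ) + 1) - l) * x^l := by
        rw [← pow_add]; congr 1; omega
      have hy : y^(i : ℕ) = y^(((i : ℕ) + 1) + l - ((j : ℕ) + 1)) * y^((j : ℕ) - l) := by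
        rw [← pow_add]; congr 1; omega
      rw [hx, hy]
      simp only [mul_pow]
      generalize x^(2*n - ((i : ℕ) + 1) - l) = p₁, x^l = p₂,
        y^(((i : ℕ) + 1) + l - ((j : ℕ) + 1)) = p₃, y^((j : ℕ) - l) = p₄,
        A 0 0^(2*n - ((i : ℕ) + 1) - l) = p₅, A 0 1^l = p₆,
        A 1 0^(((i : ℕ) + 1) + l - ((j : ℕ) + 1)) = p₇, A 1 1^((j : ℕ) - l) = p₈,
        (Nat.choose (j : ℕ) l : ℝ) = q₁,
        (Nat.choose (2*n - ((j : ℕ) + 1)) (2*n - ((i : ℕ) + 1) - l) : ℝ) = q₂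
      linear_combination p₁ * p₂ * p₃ * p₄ * p₅ * p₆ * p₇ * p₈ * q₁ * q₂ * alphaCoef n j * hα
    · simp
  · intro l _ hl
    have hl' : (j : ℕ) < l := by simpa [Nat.lt_succ_iff] using hl
    simp [Nat.choose_eq_zero_of_lt hl']

/-- `Z(A)` acts on binary forms by the substitution `w ↦ wA` of row vectors. -/
lemma binForm_mulVec (n : ℕ) (A : Matrix (Fin 2) (Fin 2) ℝ) (u : Fin (2*n) → ℝ) (x y : ℝ) :
    binForm n ((Zrep n A).mulVec u) x y =
      binForm n u (A 0 0 * x + A 1 0 * y) (A 0 1 * x + A 1 1 * y) := by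
  simp only [binForm, Matrix.mulVec, dotProduct, Finset.mul_sum]
  rw [Finset.sum_comm]
  refine Finset.sum_congr rfl fun j _ => ?_
  rw [← sum_Zrep_col, Finset.sum_mul]
  exact Finset.sum_congr rfl fun i _ => by ring

lemma eq_zero_of_binForm (n : ℕ) (u : Fin (2*n) → ℝ) (h : ∀ t, binForm n u 1 t = 0) :
    u = 0 := by
  -- The nodes `0, 1, …, 2n-1` already suffice, by invertibility of the Vandermonde matrix.
  have key : (fun i => alphaCoef n i * u i) = 0 := by
    refine Matrix.eq_zero_of_forall_index_sum_pow_mul_eq_zero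
      (f := fun i : Fin (2*n) => ((i : ℕ) : ℝ)) ?_ ?_
    · intro i j hij
      exact Fin.ext (Nat.cast_injective (R := ℝ) hij)
    · intro i
      rw [← h (i : ℕ)]
      exact Finset.sum_congr rfl fun j _ => by simp only [one_pow]; ring
  funext i
  have := congrFun key i
  simpa [alphaCoef_ne_zero] using this

lemma binForm_sub (n : ℕ) (u v : Fin (2*n) → ℝ) (x y : ℝ) :
    binForm n (u - v) x y = binForm n u x y - binForm n v x y := by
  simp only [binForm, Pi.sub_apply, mul_sub, Finset.sum_sub_distrib]

/-- The stabilizer condition, expressed as invariance of the form under substitution. -/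
lemma Zrep_mulVec_eq_iff (n : ℕ) (A : Matrix (Fin 2) (Fin 2) ℝ) (u : Fin (2*n) → ℝ) :
    (Zrep n A).mulVec u = u ↔ ∀ x y, binForm n u (A 0 0 * x + A 1 0 * y)
      (A 0 1 * x + A 1 1 * y) = binForm n u x y := by
  constructor
  · intro h x y
    rw [← binForm_mulVec, h]
  · intro h
    refine sub_eq_zero.1 (eq_zero_of_binForm n _ fun t => ?_)
    rw [binForm_sub, binForm_mulVec, h, sub_self]

lemma continuous_Zrep (n : ℕ) : Continuous (Zrep n) := by
  refine continuous_matrix fun i j => ?_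
  simp only [Zrep, Matrix.of_apply]
  refine continuous_finsetSum _ fun l _ => ?_
  split_ifs <;> fun_prop

/-- Homogeneity of degree `2n - 1`, at the point `(1, 0)` and for the scalar `2`. -/
lemma binForm_two_zero (n : ℕ) (u : Fin (2*n) → ℝ) :
    binForm n u 2 0 = 2^(2*n - 1) * binForm n u 1 0 := by
  simp only [binForm, Finset.mul_sum]
  refine Finset.sum_congr rfl fun i _ => ?_
  rcases Nat.eq_zero_or_pos (i : ℕ) with h | h
  · simp only [h, zero_add, one_pow]
    ring
  · simp [h.ne']

/-- For every nonzero `u ∈ ℝ^{2n}`, the stabilizer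
`{A ∈ SL(2,ℝ) : Z(A)u = u}` is a subgroup of `SL(2,ℝ)`, it is closed (in the topology
that `SL(2,ℝ)`, viewed as the subtype `{A : M₂(ℝ) // det A = 1}`, inherits from `M₂(ℝ)`),
and it is proper: some `A ∈ SL(2,ℝ)` satisfies `Z(A)u ≠ u`. -/
theorem Zrep_stabilizer_closed_proper (n : ℕ) (hn : 1 ≤ n)
    (u : Fin (2*n) → ℝ) (hu : u ≠ 0) :
    (∃ S : Subgroup (Matrix.SpecialLinearGroup (Fin 2) ℝ),
      (S : Set (Matrix.SpecialLinearGroup (Fin 2) ℝ)) =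
        {A : Matrix.SpecialLinearGroup (Fin 2) ℝ |
          (Zrep n (A : Matrix (Fin 2) (Fin 2) ℝ)).mulVec u = u}) ∧
    IsClosed {A : {B : Matrix (Fin 2) (Fin 2) ℝ // B.det = 1} |
      (Zrep n (A : Matrix (Fin 2) (Fin 2) ℝ)).mulVec u = u} ∧
    (∃ A : Matrix (Fin 2) (Fin 2) ℝ, A.det = 1 ∧ (Zrep n A).mulVec u ≠ u) := by
  refine ⟨⟨{ carrier := {A | (Zrep n (A : Matrix (Fin 2) (Fin 2) ℝ)).mulVec u = u}
             one_mem' := ?_, mul_mem' := ?_, inv_mem' := ?_ }, rfl⟩, ?_, ?_⟩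
  · intro A B hA hB
    simp only [Set.mem_ofPred_eq, Zrep_mulVec_eq_iff] at hA hB ⊢
    intro x y
    rw [← hA x y, ← hB (A 0 0 * x + A 1 0 * y)]
    simp only [Matrix.SpecialLinearGroup.coe_mul, Matrix.mul_apply, Fin.sum_univ_two]
    congr 1 <;> ring
  · simp [Zrep_mulVec_eq_iff]
  · intro A hA
    simp only [Set.mem_ofPred_eq, Zrep_mulVec_eq_iff] at hA ⊢
    intro x y
    have hdet : A 0 0 * A 1 1 - A 0 1 * A 1 0 = 1 := by
      rw [← Matrix.det_fin_two]; exact A.det_coe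
    rw [← hA]
    simp only [Matrix.SpecialLinearGroup.coe_inv, Matrix.adjugate_fin_two, Matrix.of_apply,
      Matrix.cons_val', Matrix.cons_val_zero, Matrix.cons_val_one, Matrix.cons_val_fin_one]
    congr 1
    · linear_combination x * hdet
    · linear_combination y * hdet
  · exact isClosed_eq (((continuous_Zrep n).comp continuous_subtype_val).matrix_mulVec
      continuous_const) continuous_const
  · by_contra! hall
    apply hu
    have h2 : binForm n u 2 0 = binForm n u 1 0 := by
      have h := (Zrep_mulVec_eq_iff n _ u).1 (hall !![2, 0; 0, 2⁻¹] (by simp [Matrix.det_fin_two]))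
        1 0
      simpa using h
    have h0 : binForm n u 1 0 = 0 := by
      rw [binForm_two_zero] at h2
      have hpow : (1 : ℝ) < 2^(2*n - 1) := one_lt_pow₀ (by norm_num) (by omega)
      have h3 : ((2 : ℝ)^(2*n - 1) - 1) * binForm n u 1 0 = 0 := by linear_combination h2
      exact (mul_eq_zero.1 h3).resolve_left (by linarith)
    refine eq_zero_of_binForm n u fun t => ?_
    have h := (Zrep_mulVec_eq_iff n _ u).1 (hall !![1, t; 0, 1] (by simp [Matrix.det_fin_two])) 1 0
    rw [← h0, ← h]
    simp

end
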